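/- arXiv:0912.4747 — 2 statements merged into one kernel-verified Lean document; each statement's English description precedes it below -/
import Mathlib

section
/- For n ≥ 3, the number of permutations of length n with exactly one occurrence of the classical pattern 1-2-3 equals the sum over i from 2 to n−1 of (C_{n−i+1} − C_{n−i})(C_i − C_{i−1}), where C_m is the m-th Catalan number. -/
/-- Number of occurrences of the classical pattern 1-2-3 in `π`. -/
def occ123 {n : ℕ} (π : Equiv.Perm (Fin n)) : ℕ :=
  (Finset.univ.filter (fun t : Fin n × Fin n × Fin n =>
    t.1 < t.2.1 ∧ t.2.1 < t.2.2 ∧ π t.1 < π t.2.1 ∧ π t.2.1 < π t.2.2)).card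

/-- Number of occurrences of the vincular pattern 1-23 in `π`. -/
def occ1_23 {n : ℕ} (π : Equiv.Perm (Fin n)) : ℕ :=
  (Finset.univ.filter (fun t : Fin n × Fin n × Fin n =>
    t.1 < t.2.1 ∧ t.2.1 < t.2.2 ∧ (t.2.2 : ℕ) = (t.2.1 : ℕ) + 1 ∧
      π t.1 < π t.2.1 ∧ π t.2.1 < π t.2.2)).card

/-- Number of occurrences of the vincular pattern 12-3 in `π`. -/
def occ12_3 {n : ℕ} (π : Equiv.Perm (Fin n)) : ℕ :=
  (Finset.univ.filter (fun t : Fin n × Fin n × Fin n =>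
    t.1 < t.2.1 ∧ t.2.1 < t.2.2 ∧ (t.2.1 : ℕ) = (t.1 : ℕ) + 1 ∧
      π t.1 < π t.2.1 ∧ π t.2.1 < π t.2.2)).card

/-- `f` is a permutation of `{0,…,n-1}` extended by the identity. -/
def IsP (n : ℕ) (f : ℕ → ℕ) : Prop :=
  (∀ x < n, f x < n) ∧ (∀ x < n, ∀ y < n, f x = f y → x = y) ∧ ∀ x, n ≤ x → f x = x

/-- Occurrence of 123. -/
def Occ (n : ℕ) (f : ℕ → ℕ) (x y z : ℕ) : Prop :=
  x < y ∧ y < z ∧ z < n ∧ f x < f y ∧ f y < f z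

/-- Permutations avoiding 123. -/
def Av (n : ℕ) : Set (ℕ → ℕ) := {f | IsP n f ∧ ∀ x y z, ¬ Occ n f x y z}

/-- Avoiders whose entries of value at least `k` are decreasing. -/
def DS (n k : ℕ) : Set (ℕ → ℕ) :=
  {f | f ∈ Av n ∧ ∀ x y, x < y → y < n → k ≤ f x → k ≤ f y → f y < f x}

/-- Extension of a permutation to `ℕ`. -/
def toF {n : ℕ} (π : Equiv.Perm (Fin n)) : ℕ → ℕ :=
  fun x => if h : x < n then (π ⟨x, h⟩ : ℕ) else x

lemma toF_val {n : ℕ} (π : Equiv.Perm (Fin n)) (x : Fin n) : toF π x = π x := by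
  simp [toF]

lemma toF_lt {n : ℕ} (π : Equiv.Perm (Fin n)) (x : ℕ) (h : x < n) : toF π x = π ⟨x, h⟩ := by
  simp [toF, h]

lemma toF_isP {n : ℕ} (π : Equiv.Perm (Fin n)) : IsP n (toF π) := by
  refine ⟨fun x hx => ?_, fun x hx y hy h => ?_, fun x hx => ?_⟩
  · rw [toF_lt _ _ hx]; exact Fin.is_lt _
  · rw [toF_lt _ _ hx, toF_lt _ _ hy] at h
    have := π.injective (Fin.ext h)
    simpa using this
  · simp [toF, not_lt.mpr hx]

lemma toF_inj {n : ℕ} : Function.Injective (toF (n := n)) := by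
  intro π σ h
  ext x
  rw [← toF_val, ← toF_val, h]

lemma IsP.exists_perm {n : ℕ} {f : ℕ → ℕ} (hf : IsP n f) :
    ∃ π : Equiv.Perm (Fin n), toF π = f := by
  obtain ⟨h1, h2, h3⟩ := hf
  have hinj : Function.Injective (fun x : Fin n => (⟨f x, h1 x x.2⟩ : Fin n)) := by
    intro x y h
    simp only [Fin.mk.injEq] at h
    exact Fin.ext (h2 _ x.2 _ y.2 h)
  refine ⟨Equiv.ofBijective _ (Finite.injective_iff_bijective.mp hinj), ?_⟩
  funext x
  by_cases hx : x < n
  · rw [toF_lt _ _ hx]; rfl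
  · rw [h3 x (by omega)]; simp [toF, hx]

lemma IsP.surj {n : ℕ} {f : ℕ → ℕ} (hf : IsP n f) (v : ℕ) (hv : v < n) : ∃ x < n, f x = v := by
  obtain ⟨π, rfl⟩ := hf.exists_perm
  refine ⟨π.symm ⟨v, hv⟩, Fin.is_lt _, ?_⟩
  rw [toF_val]; simp

lemma isP_finite (n : ℕ) : {f | IsP n f}.Finite := by
  have : {f | IsP n f} = Set.range (toF (n := n)) := by
    ext f
    constructor
    · intro h; exact h.exists_perm
    · rintro ⟨π, rfl⟩; exact toF_isP π
  rw [this]; exact Set.finite_range _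

lemma av_finite (n : ℕ) : (Av n).Finite := (isP_finite n).subset fun _ h => h.1

lemma ds_finite (n k : ℕ) : (DS n k).Finite := (av_finite n).subset fun _ h => h.1

/-- Insert `a` in front. -/
def ins (n a : ℕ) (f : ℕ → ℕ) : ℕ → ℕ
  | 0 => a
  | x + 1 => if x < n then (if f x < a then f x else f x + 1) else x + 1

/-- Append `0` at the end. -/
def app (n : ℕ) (f : ℕ → ℕ) : ℕ → ℕ :=
  fun x => if x < n then f x + 1 else if x = n then 0 else x

lemma ins_isP {n a : ℕ} {f : ℕ → ℕ} (ha : a ≤ n) (hf : IsP n f) : IsP (n + 1) (ins n a f) := by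
  obtain ⟨h1, h2, h3⟩ := hf
  refine ⟨?_, ?_, ?_⟩
  · rintro (_ | x) hx
    · simp [ins]; omega
    · have := h1 x (by omega)
      simp only [ins]; split_ifs <;> omega
  · rintro (_ | x) hx (_ | y) hy h
    · rfl
    · simp only [ins] at h; split_ifs at h <;> omega
    · simp only [ins] at h; split_ifs at h <;> omega
    · have := h2 x (by omega) y (by omega)
      simp only [ins] at h; split_ifs at h <;> omega
  · rintro (_ | x) hx
    · omega
    · simp only [ins]; rw [if_neg (by omega)]

lemma ins_inj {n a : ℕ} {f g : ℕ → ℕ} (hf : IsP n f) (hg : IsP n g)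
    (h : ins n a f = ins n a g) : f = g := by
  funext x
  by_cases hx : x < n
  · have := congrFun h (x + 1)
    simp only [ins, hx, if_true] at this
    split_ifs at this <;> omega
  · rw [hf.2.2 x (by omega), hg.2.2 x (by omega)]

lemma ins_surj {n : ℕ} {g : ℕ → ℕ} (hg : IsP (n + 1) g) : ∃ f, IsP n f ∧ ins n (g 0) f = g := by
  obtain ⟨h1, h2, h3⟩ := hg
  have h0 := h1 0 (by omega)
  have hne : ∀ x < n, g (x + 1) ≠ g 0 := fun x hx h => by
    have := h2 (x + 1) (by omega) 0 (by omega) h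
    omega
  refine ⟨fun x => if x < n then (if g (x + 1) < g 0 then g (x + 1) else g (x + 1) - 1) else x,
    ⟨?_, ?_, ?_⟩, ?_⟩
  · intro x hx
    have := h1 (x + 1) (by omega)
    have := hne x hx
    simp only [hx, if_true]; split_ifs <;> omega
  · intro x hx y hy h
    have := hne x hx
    have := hne y hy
    have := h2 (x + 1) (by omega) (y + 1) (by omega)
    simp only [hx, hy, if_true] at h
    split_ifs at h <;> omega
  · intro x hx
    simp only [not_lt.mpr hx, if_false]
  · funext x
    rcases x with _ | x
    · rfl
    · by_cases hx : x < n
      · have := hne x hx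
        simp only [ins, hx, if_true]
        split_ifs <;> omega
      · simp only [ins, hx, if_false]
        rw [h3 _ (by omega)]

lemma ins_lt {n a : ℕ} {f : ℕ → ℕ} {x y : ℕ} (hx : x < n) (hy : y < n) :
    ins n a f (x + 1) < ins n a f (y + 1) ↔ f x < f y := by
  simp only [ins, hx, hy, if_true]
  split_ifs <;> omega

lemma ins_lt0 {n a : ℕ} {f : ℕ → ℕ} {y : ℕ} (hy : y < n) :
    ins n a f 0 < ins n a f (y + 1) ↔ a ≤ f y := by
  simp only [ins, hy, if_true]
  split_ifs <;> omega

lemma ins_av {n a : ℕ} {f : ℕ → ℕ} (ha : a ≤ n) (hf : IsP n f) :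
    ins n a f ∈ Av (n + 1) ↔ f ∈ DS n a := by
  constructor
  · rintro ⟨-, h⟩
    refine ⟨⟨hf, ?_⟩, ?_⟩
    · rintro x y z ⟨h1, h2, h3, h4, h5⟩
      refine h (x + 1) (y + 1) (z + 1) ⟨by omega, by omega, by omega, ?_, ?_⟩
      · rw [ins_lt] <;> omega
      · rw [ins_lt] <;> omega
    · intro x y hxy hy hx' hy'
      by_contra hlt
      have := hf.2.1 x (by omega) y hy
      refine h 0 (x + 1) (y + 1) ⟨by omega, by omega, by omega, ?_, ?_⟩
      · rw [ins_lt0] <;> omega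
      · rw [ins_lt] <;> omega
  · rintro ⟨⟨-, h⟩, h'⟩
    refine ⟨ins_isP ha hf, ?_⟩
    rintro x (_ | y) (_ | z) ⟨h1, h2, h3, h4, h5⟩
    · omega
    · omega
    · omega
    · rw [ins_lt (by omega) (by omega)] at h5
      rcases x with _ | x
      · rw [ins_lt0 (by omega)] at h4
        have := h' y z (by omega) (by omega) (by omega) (by omega)
        omega
      · rw [ins_lt (by omega) (by omega)] at h4
        exact h x y z ⟨by omega, by omega, by omega, h4, h5⟩

lemma ins_ds {n k : ℕ} {f : ℕ → ℕ} (_ : k ≤ n) (hf : IsP n f) :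
    ins n n f ∈ DS (n + 1) k ↔ f ∈ DS n k := by
  have hv : ∀ x < n, ins n n f (x + 1) = f x := by
    intro x hx
    have := hf.1 x hx
    simp [ins, hx, this]
  constructor
  · rintro ⟨h, h'⟩
    refine ⟨((ins_av le_rfl hf).mp h).1, ?_⟩
    intro x y hxy hy hx' hy'
    have := h' (x + 1) (y + 1) (by omega) (by omega)
    rw [hv x (by omega), hv y (by omega)] at this
    exact this hx' hy'
  · rintro ⟨h, h'⟩
    refine ⟨(ins_av le_rfl hf).mpr ⟨h, ?_⟩, ?_⟩
    · intro x y hxy hy hx' hy'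
      have := hf.1 y (by omega)
      omega
    · rintro x (_ | y) hxy hy hx' hy'
      · omega
      · rw [hv y (by omega)] at hy' ⊢
        rcases x with _ | x
        · exact hf.1 y (by omega)
        · rw [hv x (by omega)] at hx' ⊢
          exact h' x y (by omega) (by omega) hx' hy'

lemma card_first (n a : ℕ) (ha : a ≤ n) :
    {f | f ∈ Av (n + 1) ∧ f 0 = a}.ncard = (DS n a).ncard := by
  rw [← Set.InjOn.ncard_image (f := ins n a) (s := DS n a)
    (fun f hf g hg h => ins_inj hf.1.1 hg.1.1 h)]
  congr 1
  ext g
  constructor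
  · rintro ⟨hg, rfl⟩
    obtain ⟨f, hf, he⟩ := ins_surj hg.1
    refine ⟨f, (ins_av ha hf).mp (he ▸ hg), he⟩
  · rintro ⟨f, hf, rfl⟩
    exact ⟨(ins_av ha hf.1.1).mpr hf, rfl⟩

lemma card_first' (n k : ℕ) (hk : k ≤ n) :
    {f | f ∈ DS (n + 1) k ∧ f 0 = n}.ncard = (DS n k).ncard := by
  rw [← Set.InjOn.ncard_image (f := ins n n) (s := DS n k)
    (fun f hf g hg h => ins_inj hf.1.1 hg.1.1 h)]
  congr 1
  ext g
  constructor
  · rintro ⟨hg, h0⟩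
    obtain ⟨f, hf, he⟩ := ins_surj hg.1.1
    rw [h0] at he
    refine ⟨f, (ins_ds hk hf).mp (he ▸ hg), he⟩
  · rintro ⟨f, hf, rfl⟩
    exact ⟨(ins_ds hk hf.1.1).mpr hf, rfl⟩

/-- Number of avoiders with first value less than `k`. -/
noncomputable def tt (n k : ℕ) : ℕ := {f | f ∈ Av n ∧ f 0 < k}.ncard

lemma tt_zero (n : ℕ) : tt n 0 = 0 := by simp [tt]

lemma tt_succ (n k : ℕ) (hk : k ≤ n) : tt (n + 1) (k + 1) = tt (n + 1) k + (DS n k).ncard := by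
  rw [← card_first n k hk, tt, tt, ← Set.ncard_union_eq ?_
    ((av_finite _).subset fun _ h => h.1) ((av_finite _).subset fun _ h => h.1)]
  · congr 1
    ext f
    simp only [Set.mem_ofPred_eq, Set.mem_union]
    have : f 0 < k + 1 ↔ f 0 < k ∨ f 0 = k := by omega
    rw [this]; tauto
  · rw [Set.disjoint_left]
    rintro f ⟨_, h⟩ ⟨_, h'⟩
    omega

lemma ds_eq_tt (n k : ℕ) (hk : k ≤ n) : (DS (n + 1) k).ncard = tt (n + 1) (k + 1) := by
  rw [tt_succ n k hk, ← card_first' n k hk, tt, ← Set.ncard_union_eq ?_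
    ((av_finite _).subset fun _ h => h.1) ((ds_finite _ k).subset fun _ h => h.1)]
  · congr 1
    ext f
    constructor
    · intro h
      by_cases h0 : f 0 < k
      · exact Or.inl ⟨h.1, h0⟩
      · right
        refine ⟨h, ?_⟩
        obtain ⟨x, hx, hfx⟩ := h.1.1.surj n (by omega)
        by_contra hne
        have hb := h.1.1.1 0 (by omega)
        rcases Nat.eq_zero_or_pos x with rfl | hpos
        · omega
        · have := h.2 0 x hpos hx (by omega) (by omega)
          omega
    · rintro (⟨h, h0⟩ | ⟨h, h0⟩)
      · refine ⟨h, ?_⟩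
        intro x y hxy hy hx' hy'
        by_contra hlt
        have := h.1.2.1 x (by omega) y hy
        have hx0 : 0 < x := by
          rcases Nat.eq_zero_or_pos x with rfl | hpos
          · omega
          · exact hpos
        exact h.2 0 x y ⟨by omega, by omega, by omega, by omega, by omega⟩
      · exact h
  · rw [Set.disjoint_left]
    rintro f ⟨_, h⟩ ⟨_, h'⟩
    omega

lemma ds_top (n : ℕ) : DS n n = Av n := by
  ext f
  constructor
  · exact fun h => h.1
  · intro h
    refine ⟨h, ?_⟩
    intro x y hxy hy hx' hy'
    have := h.1.1 y (by omega)
    omega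

lemma tt_top (n : ℕ) : tt (n + 1) (n + 1) = (Av (n + 1)).ncard := by
  rw [tt]
  congr 1
  ext f
  constructor
  · exact fun h => h.1
  · intro h
    exact ⟨h, h.1.1 0 (by omega)⟩

lemma av_zero : (Av 0).ncard = 1 := by
  have : Av 0 = {id} := by
    ext f
    constructor
    · rintro ⟨⟨_, _, h⟩, _⟩
      funext x
      exact h x (by omega)
    · rintro rfl
      refine ⟨⟨by simp, by simp, by simp⟩, ?_⟩
      rintro x y z ⟨_, _, h, _⟩
      omega
  rw [this]; simp

lemma tt_formula (n : ℕ) : ∀ k ≤ n, (tt (n + 1) (k + 1) : ℤ) + (n + 1 + k).choose (n + 2)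
    = (n + 1 + k).choose (n + 1) := by
  induction n with
  | zero =>
    intro k hk
    obtain rfl : k = 0 := by omega
    rw [tt_succ 0 0 le_rfl, tt_zero, ds_top, av_zero]
    simp
  | succ n ih =>
    intro k hk
    induction k with
    | zero =>
      rw [tt_succ _ _ hk, tt_zero, ds_eq_tt _ _ (by omega)]
      have := ih 0 (by omega)
      simp only [add_zero, Nat.choose_self] at this ⊢
      rw [Nat.choose_eq_zero_of_lt (by omega)] at this ⊢
      push_cast at this ⊢
      linarith
    | succ k ihk =>
      have h1 := ihk (by omega)
      rw [tt_succ _ _ hk]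
      have e1 : n + 1 + 1 + (k + 1) = (n + 1 + 1 + k) + 1 := by ring
      have c1 : (n + 1 + 1 + k + 1).choose (n + 1 + 2)
        = (n + 1 + 1 + k).choose (n + 2) + (n + 1 + 1 + k).choose (n + 3) :=
        Nat.choose_succ_succ _ _
      have c2 : (n + 1 + 1 + k + 1).choose (n + 1 + 1)
        = (n + 1 + 1 + k).choose (n + 1) + (n + 1 + 1 + k).choose (n + 2) :=
        Nat.choose_succ_succ _ _
      rw [e1, c1, c2]
      rcases Nat.lt_or_ge k n with hkn | hkn
      · rw [ds_eq_tt _ _ (by omega)]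
        have h2 := ih (k + 1) (by omega)
        have e2 : n + 1 + (k + 1) = n + 1 + 1 + k := by ring
        rw [e2] at h2
        push_cast at h1 h2 ⊢
        linarith
      · obtain rfl : k = n := by omega
        rw [ds_top, ← tt_top]
        have h2 := ih k le_rfl
        have c3 : (k + 1 + 1 + k).choose (k + 1)
          = (k + 1 + k).choose k + (k + 1 + k).choose (k + 1) := by
          rw [show k + 1 + 1 + k = (k + 1 + k) + 1 by ring]; exact Nat.choose_succ_succ _ _
        have c4 : (k + 1 + 1 + k).choose (k + 2)
          = (k + 1 + k).choose (k + 1) + (k + 1 + k).choose (k + 2) := by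
          rw [show k + 1 + 1 + k = (k + 1 + k) + 1 by ring]; exact Nat.choose_succ_succ _ _
        have c5 : (k + 1 + k).choose k = (k + 1 + k).choose (k + 1) := by
          apply Nat.choose_symm_of_eq_add; ring
        have c6 : (k + 1 + 1 + k).choose (k + 1 + 1) = (k + 1 + 1 + k).choose (k + 2) := rfl
        have c7 : (k + 1 + 1 + k).choose (k + 1 + 2) = (k + 1 + 1 + k).choose (k + 3) := rfl
        rw [c6, c7] at h1
        zify at c3 c4 c5
        push_cast at h1 h2 ⊢
        linarith

lemma av_card (n : ℕ) : (Av n).ncard = catalan n := by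
  rcases n with _ | n
  · rw [av_zero, catalan_zero]
  · have h := tt_formula n n le_rfl
    rw [tt_top] at h
    have h1 := succ_mul_catalan_eq_centralBinom (n + 1)
    rw [Nat.centralBinom_eq_two_mul_choose] at h1
    have h2 : (2 * (n + 1)).choose (n + 1)
      = (n + 1 + n).choose n + (n + 1 + n).choose (n + 1) := by
      rw [show 2 * (n + 1) = (n + 1 + n) + 1 by ring]; exact Nat.choose_succ_succ _ _
    have c5 : (n + 1 + n).choose n = (n + 1 + n).choose (n + 1) := by
      apply Nat.choose_symm_of_eq_add; ring
    have h3 := Nat.choose_succ_right_eq (n + 1 + n) (n + 1)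
    have e : n + 1 + n - (n + 1) = n := by omega
    rw [e] at h3
    rw [h2, c5] at h1
    zify at h1 h3 ⊢
    have : ((n : ℤ) + 2) * ((Av (n + 1)).ncard : ℤ) = (n + 2) * catalan (n + 1) := by
      have hh : ((Av (n + 1)).ncard : ℤ)
        = (n + 1 + n).choose (n + 1) - (n + 1 + n).choose (n + 2) := by linarith
      rw [hh]
      linarith
    exact mul_left_cancel₀ (by positivity) this

lemma card_last (n : ℕ) : {f | f ∈ Av (n + 1) ∧ f n = 0}.ncard = (Av n).ncard := by
  rw [← Set.InjOn.ncard_image (f := app n) (s := Av n)]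
  · congr 1
    ext g
    constructor
    · rintro ⟨⟨⟨h1, h2, h3⟩, h4⟩, h0⟩
      have hne : ∀ x < n, g x ≠ 0 := fun x hx h => by
        have := h2 x (by omega) n (by omega) (by omega)
        omega
      refine ⟨fun x => if x < n then g x - 1 else x, ⟨⟨?_, ?_, ?_⟩, ?_⟩, ?_⟩
      · intro x hx
        have := h1 x (by omega)
        have := hne x hx
        simp only [hx, if_true]; omega
      · intro x hx y hy h
        have := hne x hx
        have := hne y hy
        simp only [hx, hy, if_true] at h
        exact h2 x (by omega) y (by omega) (by omega)
      · intro x hx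
        simp [not_lt.mpr hx]
      · rintro x y z ⟨a1, a2, a3, a4, a5⟩
        simp only [show x < n by omega, show y < n by omega, a3, if_true] at a4 a5
        exact h4 x y z ⟨a1, a2, by omega, by omega, by omega⟩
      · funext x
        simp only [app]
        split_ifs with hx hx'
        · have := hne x hx
          omega
        · rw [hx', h0]
        · rw [h3 x (by omega)]
    · rintro ⟨f, ⟨⟨h1, h2, h3⟩, h4⟩, rfl⟩
      refine ⟨⟨⟨?_, ?_, ?_⟩, ?_⟩, ?_⟩
      · intro x hx
        have := h1 x
        simp only [app]; split_ifs <;> omega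
      · intro x hx y hy h
        have := h2 x
        have := h2 x
        simp only [app] at h
        split_ifs at h with q1 q2
        · exact h2 x q1 y q2 (by omega)
        all_goals omega
      · intro x hx
        simp only [app]; split_ifs <;> omega
      · rintro x y z ⟨a1, a2, a3, a4, a5⟩
        simp only [app] at a4 a5
        have : z < n := by
          by_contra hz
          rw [if_neg hz, if_pos (by omega : z = n)] at a5
          omega
        simp only [show x < n by omega, show y < n by omega, this, if_true] at a4 a5
        exact h4 x y z ⟨a1, a2, this, by omega, by omega⟩
      · simp [app]
  · intro f hf g hg h
    funext x
    by_cases hx : x < n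
    · have := congrFun h x
      simp only [app, hx, if_true] at this
      omega
    · rw [hf.1.2.2 x (by omega), hg.1.2.2 x (by omega)]

/-- Left factors. -/
def LS (p : ℕ) : Set (ℕ → ℕ) := {f | f ∈ Av (p + 1) ∧ f p ≠ 0}
/-- Right factors. -/
def RS (q : ℕ) : Set (ℕ → ℕ) := {f | f ∈ Av (q + 1) ∧ f 0 ≠ q}

lemma ls_card (p : ℕ) : ((LS p).ncard : ℤ) = catalan (p + 1) - catalan p := by
  have h := Set.ncard_inter_add_ncard_sdiff_eq_ncard (Av (p + 1)) {f | f p = 0} (av_finite _)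
  have h1 : Av (p + 1) ∩ {f | f p = 0} = {f | f ∈ Av (p + 1) ∧ f p = 0} := rfl
  have h2 : Av (p + 1) \ {f | f p = 0} = LS p := rfl
  rw [h1, h2, card_last, av_card, av_card] at h
  omega

lemma rs_card (q : ℕ) : ((RS q).ncard : ℤ) = catalan (q + 1) - catalan q := by
  have h := Set.ncard_inter_add_ncard_sdiff_eq_ncard (Av (q + 1)) {f | f 0 = q} (av_finite _)
  have h1 : Av (q + 1) ∩ {f | f 0 = q} = {f | f ∈ Av (q + 1) ∧ f 0 = q} := rfl
  have h2 : Av (q + 1) \ {f | f 0 = q} = RS q := rfl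
  rw [h1, h2, card_first _ _ le_rfl, ds_top, av_card, av_card] at h
  omega

/-- Permutations with a single occurrence of 123, with middle position `p`. -/
def SG (n p : ℕ) : Set (ℕ → ℕ) :=
  {f | IsP n f ∧ ∃ i k, Occ n f i p k ∧ ∀ x y z, Occ n f x y z → x = i ∧ y = p ∧ z = k}

/-- Gluing of a left and a right factor. -/
def glue (p q : ℕ) (w : (ℕ → ℕ) × (ℕ → ℕ)) : ℕ → ℕ := fun x =>
  if x < p then (if w.1 x = 0 then w.2 0 else w.1 x + q)
  else if x = p then q
  else if x ≤ p + q then (if w.2 (x - p) = q then w.1 p + q else w.2 (x - p))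
  else x

lemma glue_mem {p q : ℕ} {L R : ℕ → ℕ} (hL : L ∈ LS p) (hR : R ∈ RS q) :
    glue p q (L, R) ∈ SG (p + q + 1) p := by
  obtain ⟨⟨hLP, hLa⟩, hL0⟩ := hL
  obtain ⟨⟨hRP, hRa⟩, hR0⟩ := hR
  obtain ⟨i, hi, hLi⟩ := hLP.surj 0 (by omega)
  obtain ⟨k, hk, hRk⟩ := hRP.surj q (by omega)
  have hip : i < p := by
    rcases Nat.lt_or_ge i p with h | h
    · exact h
    · obtain rfl : i = p := by omega
      exact absurd hLi hL0
  have hk0 : 0 < k := by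
    rcases Nat.eq_zero_or_pos k with rfl | h
    · exact absurd hRk hR0
    · exact h
  obtain ⟨l1, l2, l3⟩ := hLP
  obtain ⟨r1, r2, r3⟩ := hRP
  have hLp := l1 p (by omega)
  have hR00 := r1 0 (by omega)
  -- values of the glued permutation
  set g := glue p q (L, R) with hg
  have gi : g i = R 0 := by simp [hg, glue, hip, hLi]
  have gp : g p = q := by simp [hg, glue]
  have gk : g (p + k) = L p + q := by
    have e1 : ¬ (p + k < p) := by omega
    have e2 : p + k ≠ p := by omega
    have e3 : p + k ≤ p + q := by omega
    simp only [hg, glue, e1, e2, e3, if_true, if_false, Nat.add_sub_cancel_left, hRk]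
  have gl : ∀ x < p, x ≠ i → g x = L x + q ∧ 0 < L x ∧ L x < p + 1 ∧ L x ≠ L p := by
    intro x hx hxi
    have hne : L x ≠ 0 := fun h => hxi (l2 x (by omega) i hi (by omega))
    refine ⟨by simp [hg, glue, hx, hne], by omega, l1 x (by omega), fun h => ?_⟩
    have := l2 x (by omega) p (by omega) h
    omega
  have gr : ∀ y, 0 < y → y ≤ q → y ≠ k → g (p + y) = R y ∧ R y < q ∧ R y ≠ R 0 := by
    intro y hy hyq hyk
    have hne : R y ≠ q := fun h => hyk (r2 y (by omega) k hk (by omega))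
    have e1 : ¬ (p + y < p) := by omega
    have e2 : p + y ≠ p := by omega
    have e3 : p + y ≤ p + q := by omega
    have := r1 y (by omega)
    refine ⟨?_, by omega, fun h => ?_⟩
    · simp only [hg, glue, e1, e2, e3, if_true, if_false, Nat.add_sub_cancel_left, hne]
    · have := r2 y (by omega) 0 (by omega) h
      omega
  have cases5 : ∀ x < p + q + 1, x = i ∨ (x < p ∧ x ≠ i) ∨ x = p ∨ x = p + k ∨
      ∃ y, 0 < y ∧ y ≤ q ∧ y ≠ k ∧ x = p + y := by
    intro x hx
    rcases Nat.lt_trichotomy x p with h | h | h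
    · by_cases h' : x = i
      · exact Or.inl h'
      · exact Or.inr (Or.inl ⟨h, h'⟩)
    · exact Or.inr (Or.inr (Or.inl h))
    · by_cases h' : x = p + k
      · exact Or.inr (Or.inr (Or.inr (Or.inl h')))
      · exact Or.inr (Or.inr (Or.inr (Or.inr
          ⟨x - p, by omega, by omega, by omega, by omega⟩)))
  refine ⟨⟨?_, ?_, ?_⟩, i, p + k, ⟨hip, by omega, by omega, by omega, by omega⟩, ?_⟩
  · intro x hx
    rcases cases5 x hx with rfl | ⟨h, h'⟩ | rfl | rfl | ⟨y, h1, h2, h3, rfl⟩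
    · omega
    · have := gl x h h'; omega
    · omega
    · omega
    · have := gr y h1 h2 h3; omega
  · intro x hx x' hx' he
    rcases cases5 x hx with rfl | ⟨h, h'⟩ | rfl | rfl | ⟨y, h1, h2, h3, rfl⟩ <;>
    rcases cases5 x' hx' with rfl | ⟨j, j'⟩ | rfl | rfl | ⟨y', j1, j2, j3, rfl⟩ <;>
    (try have A1 := gl x h h') <;> (try have A2 := gl x' j j') <;>
    (try have B1 := gr y h1 h2 h3) <;> (try have B2 := gr y' j1 j2 j3) <;>
    first
      | rfl
      | omega
      | exact l2 x (by omega) x' (by omega) (by omega)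
      | (have := r2 y (by omega) y' (by omega) (by omega); omega)
  · intro x hx
    have e1 : ¬ (x < p) := by omega
    have e2 : x ≠ p := by omega
    have e3 : ¬ (x ≤ p + q) := by omega
    simp only [hg, glue, e1, e2, e3, if_false]
  · rintro x y z ⟨a1, a2, a3, a4, a5⟩
    rcases Nat.lt_trichotomy y p with h | h | h
    · exfalso
      have hyi : y ≠ i := by
        rintro rfl
        have := gl x (by omega) (by omega)
        omega
      have hy := gl y h hyi
      have hx : L x < L y := by
        by_cases hxi : x = i
        · rw [hxi, hLi]; omega
        · have := gl x (by omega) hxi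
          omega
      rcases cases5 z a3 with rfl | ⟨h, h'⟩ | rfl | rfl | ⟨w, h1, h2, h3, rfl⟩
      · omega
      · have := gl z h h'
        exact hLa x y z ⟨a1, a2, by omega, hx, by omega⟩
      · omega
      · exact hLa x y p ⟨a1, by omega, by omega, hx, by omega⟩
      · have := gr w h1 h2 h3
        omega
    · subst h
      refine ⟨?_, rfl, ?_⟩
      · by_contra hxi
        have := gl x (by omega) hxi
        omega
      · rcases cases5 z a3 with rfl | ⟨h, h'⟩ | rfl | rfl | ⟨w, h1, h2, h3, rfl⟩
        · omega
        · omega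
        · omega
        · rfl
        · have := gr w h1 h2 h3
          omega
    · exfalso
      obtain ⟨y, rfl⟩ : ∃ y', y = p + y' := ⟨y - p, by omega⟩
      obtain ⟨z, rfl⟩ : ∃ z', z = p + z' := ⟨z - p, by omega⟩
      have hyk : y ≠ k := by
        rintro rfl
        have := gr z (by omega) (by omega) (by omega)
        omega
      have hy := gr y (by omega) (by omega) hyk
      have hz : R y < R z := by
        by_cases hzk : z = k
        · rw [hzk, hRk]; omega
        · have := gr z (by omega) (by omega) hzk
          omega
      rcases cases5 x (by omega) with rfl | ⟨h, h'⟩ | rfl | rfl | ⟨w, h1, h2, h3, rfl⟩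
      · exact hRa 0 y z ⟨by omega, by omega, by omega, by omega, hz⟩
      · have := gl x h h'
        omega
      · omega
      · omega
      · have := gr w h1 h2 h3
        exact hRa w y z ⟨by omega, by omega, by omega, by omega, hz⟩

lemma glue_inj {p q : ℕ} : Set.InjOn (glue p q) (LS p ×ˢ RS q) := by
  rintro ⟨L, R⟩ ⟨hL, hR⟩ ⟨L', R'⟩ ⟨hL', hR'⟩ h
  simp only at hL hR hL' hR'
  have hv : ∀ x, glue p q (L, R) x = glue p q (L', R') x := fun x => congrFun h x
  obtain ⟨⟨⟨l1, l2, l3⟩, -⟩, hL0⟩ := hL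
  obtain ⟨⟨⟨r1, r2, r3⟩, -⟩, hR0⟩ := hR
  obtain ⟨⟨⟨l1', l2', l3'⟩, -⟩, hL0'⟩ := hL'
  obtain ⟨⟨⟨r1', r2', r3'⟩, -⟩, hR0'⟩ := hR'
  have a1 := r1 0 (by omega)
  have a1' := r1' 0 (by omega)
  have a2 := l1 p (by omega)
  have a2' := l1' p (by omega)
  have hLx : ∀ x < p, L x = L' x ∧ (L x = 0 → R 0 = R' 0) := by
    intro x hx
    have := hv x
    simp only [glue, hx, if_true] at this
    split_ifs at this <;> omega
  have hRx : ∀ y, 0 < y → y ≤ q → R y = R' y ∧ (R y = q → L p = L' p) := by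
    intro y hy hyq
    have hvy := hv (p + y)
    have e1 : ¬ (p + y < p) := by omega
    have e2 : p + y ≠ p := by omega
    have e3 : p + y ≤ p + q := by omega
    have := r1 y (by omega)
    have := r1' y (by omega)
    simp only [glue, e1, e2, e3, if_true, if_false, Nat.add_sub_cancel_left] at hvy
    split_ifs at hvy <;> omega
  obtain ⟨i, hi, hLi⟩ := IsP.surj ⟨l1, l2, l3⟩ 0 (by omega)
  obtain ⟨k, hk, hRk⟩ := IsP.surj ⟨r1, r2, r3⟩ q (by omega)
  have hip : i ≠ p := by rintro rfl; exact hL0 hLi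
  have hk0 : k ≠ 0 := by rintro rfl; exact hR0 hRk
  have eR := (hLx i (by omega)).2 hLi
  have eL := (hRx k (by omega) (by omega)).2 hRk
  have hLL : L = L' := by
    funext x
    rcases Nat.lt_trichotomy x p with h | h | h
    · exact (hLx x h).1
    · rw [h]; exact eL
    · rw [l3 x (by omega), l3' x (by omega)]
  have hRR : R = R' := by
    funext x
    rcases Nat.eq_zero_or_pos x with rfl | h
    · exact eR
    · by_cases hx : x ≤ q
      · exact (hRx x h hx).1
      · rw [r3 x (by omega), r3' x (by omega)]
  rw [hLL, hRR]

lemma sg_val {n p : ℕ} {f : ℕ → ℕ} (hf : IsP n f) {i k : ℕ} (ho : Occ n f i p k)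
    (hu : ∀ x y z, Occ n f x y z → x = i ∧ y = p ∧ z = k) :
    (∀ x < p, x ≠ i → f p < f x) ∧ (∀ y, p < y → y < n → y ≠ k → f y < f p) ∧
      f p + p + 1 = n := by
  obtain ⟨o1, o2, o3, o4, o5⟩ := ho
  have hl : ∀ x < p, x ≠ i → f p < f x := by
    intro x hx hxi
    by_contra hlt
    have := hf.2.1 x (by omega) p (by omega)
    have := hu x p k ⟨hx, o2, o3, by omega, o5⟩
    omega
  have hr : ∀ y, p < y → y < n → y ≠ k → f y < f p := by
    intro y hy hyn hyk
    by_contra hlt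
    have := hf.2.1 y (by omega) p (by omega)
    have := hu i p y ⟨o1, hy, hyn, o4, by omega⟩
    omega
  refine ⟨hl, hr, ?_⟩
  have hfp := hf.1 p (by omega)
  have hcard : (insert k ((Finset.range p).erase i)).card = (Finset.Ioo (f p) n).card := by
    apply Finset.card_bij (fun x _ => f x)
    · intro x hx
      simp only [Finset.mem_insert, Finset.mem_erase, Finset.mem_range] at hx
      rw [Finset.mem_Ioo]
      rcases hx with rfl | ⟨h1, h2⟩
      · exact ⟨o5, hf.1 _ o3⟩
      · exact ⟨hl x h2 h1, hf.1 _ (by omega)⟩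
    · intro x hx y hy h
      simp only [Finset.mem_insert, Finset.mem_erase, Finset.mem_range] at hx hy
      exact hf.2.1 x (by omega) y (by omega) h
    · intro v hv
      rw [Finset.mem_Ioo] at hv
      obtain ⟨x, hx, rfl⟩ := hf.surj v hv.2
      refine ⟨x, ?_, rfl⟩
      simp only [Finset.mem_insert, Finset.mem_erase, Finset.mem_range]
      by_contra hcon
      push Not at hcon
      by_cases hxi : x = i
      · subst hxi; omega
      · have h1 := hcon.2 hxi
        rcases Nat.eq_or_lt_of_le h1 with h2 | h2
        · subst h2; omega
        · have := hr x h2 hx hcon.1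
          omega
  rw [Finset.card_insert_of_notMem (by simp; omega),
    Finset.card_erase_of_mem (by simpa using o1), Finset.card_range, Nat.card_Ioo] at hcard
  omega

lemma glue_surj {p q : ℕ} {f : ℕ → ℕ} (hf : f ∈ SG (p + q + 1) p) :
    f ∈ glue p q '' (LS p ×ˢ RS q) := by
  obtain ⟨hP, i, k, ho, hu⟩ := hf
  obtain ⟨hl, hr, hv⟩ := sg_val hP ho hu
  obtain ⟨o1, o2, o3, o4, o5⟩ := ho
  obtain ⟨f1, f2, f3⟩ := hP
  have hq : f p = q := by omega
  rw [hq] at hl hr o4 o5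
  obtain ⟨k, rfl⟩ : ∃ k', k = p + k' := ⟨k - p, by omega⟩
  set L : ℕ → ℕ := fun x => if x < p then (if x = i then 0 else f x - q)
    else if x = p then f (p + k) - q else x with hLdef
  set R : ℕ → ℕ := fun y => if y = 0 then f i else if y = k then q else
    if y ≤ q then f (p + y) else y with hRdef
  have Li : L i = 0 := by simp [hLdef, o1]
  have Lp : L p = f (p + k) - q := by simp [hLdef]
  have Lx : ∀ x < p, x ≠ i → L x = f x - q := by
    intro x hx hxi; simp [hLdef, hx, hxi]
  have Lo : ∀ x, p < x → L x = x := by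
    intro x hx
    have e1 : ¬ (x < p) := by omega
    have e2 : x ≠ p := by omega
    simp [hLdef, e1, e2]
  have R0 : R 0 = f i := by simp [hRdef]
  have Rk : R k = q := by
    have : k ≠ 0 := by omega
    simp [hRdef, this]
  have Ry : ∀ y, 0 < y → y ≤ q → y ≠ k → R y = f (p + y) := by
    intro y hy hyq hyk
    have : y ≠ 0 := by omega
    simp [hRdef, this, hyk, hyq]
  have Ro : ∀ y, q < y → R y = y := by
    intro y hy
    have e1 : y ≠ 0 := by omega
    have e2 : y ≠ k := by omega
    have e3 : ¬ (y ≤ q) := by omega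
    simp [hRdef, e1, e2, e3]
  have bk := f1 (p + k) o3
  have casL : ∀ x < p + 1, x = i ∨ (x < p ∧ x ≠ i) ∨ x = p := by intro x hx; omega
  have casR : ∀ y < q + 1, y = 0 ∨ y = k ∨ (0 < y ∧ y ≤ q ∧ y ≠ k) := by intro y hy; omega
  have LP : IsP (p + 1) L := by
    refine ⟨?_, ?_, fun x hx => Lo x (by omega)⟩
    · intro x hx
      rcases casL x hx with rfl | ⟨h, h'⟩ | rfl
      · omega
      · have := Lx x h h'
        have := f1 x (by omega)
        omega
      · omega
    · intro x hx y hy he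
      have g1 := f2 x (by omega) y (by omega)
      have g2 := f2 x (by omega) (p + k) (by omega)
      have g3 := f2 y (by omega) (p + k) (by omega)
      rcases casL x hx with h | ⟨h, h'⟩ | h <;> rcases casL y hy with j | ⟨j, j'⟩ | j <;>
        (try have A1 := Lx x h h') <;> (try have A2 := Lx y j j') <;>
        (try have B1 := hl x h h') <;> (try have B2 := hl y j j') <;>
        (try rw [h] at he) <;> (try rw [j] at he) <;> omega
  have RP : IsP (q + 1) R := by
    refine ⟨?_, ?_, fun x hx => Ro x (by omega)⟩
    · intro x hx
      rcases casR x hx with rfl | rfl | ⟨h, h', h''⟩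
      · omega
      · omega
      · have := Ry x h h' h''
        have := hr (p + x) (by omega) (by omega) (by omega)
        omega
    · intro x hx y hy he
      have g1 := f2 (p + x) (by omega) (p + y) (by omega)
      have g2 := f2 (p + x) (by omega) i (by omega)
      have g3 := f2 (p + y) (by omega) i (by omega)
      rcases casR x hx with h | h | ⟨h, h', h''⟩ <;>
        rcases casR y hy with j | j | ⟨j, j', j''⟩ <;>
        (try have A1 := Ry x h h' h'') <;> (try have A2 := Ry y j j' j'') <;>
        (try have B1 := hr (p + x) (by omega) (by omega) (by omega)) <;>
        (try have B2 := hr (p + y) (by omega) (by omega) (by omega)) <;>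
        (try rw [h] at he) <;> (try rw [j] at he) <;> omega
  have hLne : L p ≠ 0 := by omega
  have hRne : R 0 ≠ q := by omega
  suffices hs : (∀ x y z, ¬ Occ (p + 1) L x y z) ∧ (∀ x y z, ¬ Occ (q + 1) R x y z) ∧
      glue p q (L, R) = f from
    ⟨(L, R), ⟨⟨⟨LP, hs.1⟩, hLne⟩, ⟨⟨RP, hs.2.1⟩, hRne⟩⟩, hs.2.2⟩
  refine ⟨?_, ?_, ?_⟩
  · rintro x y z ⟨a1, a2, a3, a4, a5⟩
    have hyi : y ≠ i := by rintro rfl; omega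
    have hzi : z ≠ i := by rintro rfl; omega
    have y1 := Lx y (by omega) hyi
    have y2 := hl y (by omega) hyi
    have hxy : f x < f y := by
      by_cases hxi : x = i
      · rw [hxi]; omega
      · have := Lx x (by omega) hxi
        have := hl x (by omega) hxi
        omega
    by_cases hz : z = p
    · subst hz
      have := hu x y (z + k) ⟨a1, by omega, by omega, hxy, by omega⟩
      omega
    · have := Lx z (by omega) hzi
      have := hl z (by omega) hzi
      have := hu x y z ⟨a1, by omega, by omega, hxy, by omega⟩
      omega
  · rintro x y z ⟨a1, a2, a3, a4, a5⟩
    have hbd := RP.1 z a3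
    have hyk : y ≠ k := by rintro rfl; omega
    have hxk : x ≠ k := by rintro rfl; have := RP.1 y (by omega); omega
    have y1 := Ry y (by omega) (by omega) hyk
    have y2 := hr (p + y) (by omega) (by omega) (by omega)
    have hyz : f (p + y) < f (p + z) := by
      by_cases hzk : z = k
      · rw [hzk]; omega
      · have := Ry z (by omega) (by omega) hzk
        omega
    rcases Nat.eq_zero_or_pos x with rfl | hx
    · have := hu i (p + y) (p + z) ⟨by omega, by omega, by omega, by omega, hyz⟩
      omega
    · have := Ry x hx (by omega) hxk
      have := hu (p + x) (p + y) (p + z) ⟨by omega, by omega, by omega, by omega, hyz⟩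
      omega
  · funext x
    simp only [glue]
    split_ifs with c1 c2 c3 c4 c5
    · by_cases hxi : x = i
      · rw [hxi, R0]
      · have := Lx x c1 hxi
        have := hl x c1 hxi
        omega
    · have hxi : x ≠ i := by rintro rfl; omega
      have := Lx x c1 hxi
      have := hl x c1 hxi
      omega
    · rw [c3, hq]
    · have : x - p = k := by
        by_contra hne
        have w1 := Ry (x - p) (by omega) (by omega) hne
        have w2 := hr x (by omega) (by omega) (by omega)
        have e : p + (x - p) = x := by omega
        rw [e] at w1
        omega
      have : x = p + k := by omega
      rw [this]; omega
    · have hne : x - p ≠ k := by intro h; rw [h] at c5; omega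
      rw [Ry (x - p) (by omega) (by omega) hne]
      congr 1; omega
    · rw [f3 x (by omega)]

lemma sg_card (p q : ℕ) : ((SG (p + q + 1) p).ncard : ℤ)
    = (catalan (q + 1) - catalan q) * (catalan (p + 1) - catalan p) := by
  have : SG (p + q + 1) p = glue p q '' (LS p ×ˢ RS q) := by
    apply Set.Subset.antisymm
    · intro f hf; exact glue_surj hf
    · rintro _ ⟨⟨L, R⟩, ⟨hL, hR⟩, rfl⟩
      exact glue_mem hL hR
  rw [this, glue_inj.ncard_image, Set.ncard_prod, Nat.cast_mul, ls_card, rs_card, mul_comm]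

lemma occ123_eq_one {n : ℕ} (π : Equiv.Perm (Fin n)) :
    occ123 π = 1 ↔ ∃ p, toF π ∈ SG n p := by
  have key : ∀ x y z : Fin n, (x < y ∧ y < z ∧ π x < π y ∧ π y < π z) ↔
      Occ n (toF π) x y z := by
    intro x y z
    simp only [Occ, toF_val, Fin.lt_def]
    have := z.2
    tauto
  rw [occ123, Finset.card_eq_one]
  constructor
  · rintro ⟨⟨i, p, k⟩, h⟩
    have hm : ∀ x y z : Fin n, Occ n (toF π) x y z ↔ (x, y, z) = (i, p, k) := by
      intro x y z
      rw [← key, ← Finset.mem_singleton, ← h]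
      simp
    refine ⟨p, toF_isP π, i, k, (hm i p k).mpr rfl, ?_⟩
    intro x y z hO
    have hz := hO.2.2.1
    have hy := hO.2.1
    have hx := hO.1
    have := (hm ⟨x, by omega⟩ ⟨y, by omega⟩ ⟨z, hz⟩).mp hO
    simp only [Prod.mk.injEq, Fin.ext_iff] at this
    exact this
  · rintro ⟨p, -, i, k, hO, hu⟩
    have hz := hO.2.2.1
    have hy := hO.2.1
    have hx := hO.1
    refine ⟨(⟨i, by omega⟩, ⟨p, by omega⟩, ⟨k, hz⟩), ?_⟩
    ext ⟨x, y, z⟩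
    simp only [Finset.mem_filter, Finset.mem_univ, true_and, Finset.mem_singleton, Prod.mk.injEq]
    rw [key]
    constructor
    · intro h
      have := hu x y z h
      simpa only [Fin.ext_iff] using this
    · rintro ⟨rfl, rfl, rfl⟩
      exact hO

lemma single_eq_sum (n : ℕ) :
    {π : Equiv.Perm (Fin n) | occ123 π = 1}.ncard
      = ∑ i ∈ Finset.Icc 2 (n - 1), (SG n (i - 1)).ncard := by
  classical
  have hfin : ∀ p, (SG n p).Finite := fun p => (isP_finite n).subset fun _ h => h.1
  rw [← Set.ncard_image_of_injective _ (toF_inj (n := n))]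
  have : toF '' {π : Equiv.Perm (Fin n) | occ123 π = 1}
      = ((Finset.Icc 2 (n - 1)).biUnion fun i => (hfin (i - 1)).toFinset : Finset (ℕ → ℕ)) := by
    ext f
    simp only [Set.mem_image, Set.mem_ofPred_eq, Finset.mem_coe, Finset.mem_biUnion,
      Finset.mem_Icc, Set.Finite.mem_toFinset, occ123_eq_one]
    constructor
    · rintro ⟨π, ⟨p, hp⟩, rfl⟩
      obtain ⟨-, i, k, hO, -⟩ := id hp
      have hz := hO.2.2.1
      have hy := hO.2.1
      have hx := hO.1
      exact ⟨p + 1, by omega, by simpa using hp⟩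
    · rintro ⟨i, -, hi⟩
      obtain ⟨π, rfl⟩ := hi.1.exists_perm
      exact ⟨π, ⟨_, hi⟩, rfl⟩
  rw [this, Set.ncard_coe_finset, Finset.card_biUnion]
  · refine Finset.sum_congr rfl fun i _ => ?_
    rw [Set.ncard_eq_toFinset_card _ (hfin (i - 1))]
  · intro i hi j hj hij
    simp only [Function.onFun]
    rw [Finset.disjoint_left]
    intro f hf hf'
    rw [Set.Finite.mem_toFinset] at hf hf'
    obtain ⟨-, a, b, hO, hu⟩ := hf
    obtain ⟨-, a', b', hO', hu'⟩ := hf'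
    have := hu' _ _ _ hO
    simp only [Finset.mem_coe, Finset.mem_Icc] at hi hj
    omega

/-- The number of permutations of length `n ≥ 3` with exactly one occurrence of
the classical pattern 1-2-3 equals
`∑_(i=2)^(n-1) (C_(n-i+1) - C_(n-i)) * (C_i - C_(i-1))`. -/
theorem single_123_count_sum (n : ℕ) (hn : 3 ≤ n) :
    ({π : Equiv.Perm (Fin n) | occ123 π = 1}.ncard : ℤ)
      = ∑ i ∈ Finset.Icc 2 (n - 1),
          ((catalan (n - i + 1) : ℤ) - catalan (n - i)) *
            ((catalan i : ℤ) - catalan (i - 1)) := by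
  rw [single_eq_sum, Nat.cast_sum]
  refine Finset.sum_congr rfl fun i hi => ?_
  rw [Finset.mem_Icc] at hi
  have h := sg_card (i - 1) (n - i)
  have e1 : i - 1 + (n - i) + 1 = n := by omega
  have e2 : i - 1 + 1 = i := by omega
  rw [e1, e2] at h
  exact h
end

section
/- For n ≥ 3 and 2 ≤ b ≤ n−1, the number of permutations of length n with exactly one occurrence of the vincular pattern 1-23 and exactly one occurrence of the classical pattern 1-2-3, whose unique occurrence of 1-23 uses middle value b, equals (C_{n−b+1} − C_{n−b}) * C_{b−1}. -/
open Equiv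

def Av123 {n : ℕ} (π : Perm (Fin n)) : Prop :=
  ∀ x y z : Fin n, x < y → y < z → π x < π y → π y < π z → False

def DecPre {n : ℕ} (k : ℕ) (π : Perm (Fin n)) : Prop :=
  ∀ x y : Fin n, x < y → (y : ℕ) < k → π y < π x

def insPerm {n : ℕ} (i p : Fin (n+1)) (σ : Perm (Fin n)) : Perm (Fin (n+1)) :=
  (finSuccEquiv' i).trans ((Equiv.optionCongr σ).trans (finSuccEquiv' p).symm)

lemma insPerm_self {n : ℕ} (i p : Fin (n+1)) (σ : Perm (Fin n)) : insPerm i p σ i = p := by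
  simp [insPerm]

lemma insPerm_succAbove {n : ℕ} (i p : Fin (n+1)) (σ : Perm (Fin n)) (x : Fin n) :
    insPerm i p σ (i.succAbove x) = p.succAbove (σ x) := by
  simp [insPerm]

lemma insPerm_inj {n : ℕ} (i p : Fin (n+1)) : Function.Injective (insPerm (n := n) i p) := by
  intro σ τ h
  ext x
  have := congrArg (fun e => e (i.succAbove x)) h
  simp only [insPerm_succAbove] at this
  rw [Fin.succAbove_right_injective this]

lemma insPerm_surj {n : ℕ} (i p : Fin (n+1)) (π : Perm (Fin (n+1))) (h : π i = p) :
    ∃ σ, insPerm i p σ = π := by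
  have hne : ∀ x : Fin n, π (i.succAbove x) ≠ p := by
    intro x hx
    rw [← h] at hx
    exact Fin.succAbove_ne i x (π.injective hx)
  choose f hf using fun x => Fin.exists_succAbove_eq (hne x)
  have hinj : Function.Injective f := by
    intro x y hxy
    have := hf x
    rw [hxy, hf y] at this
    exact (Fin.succAbove_right_injective (π.injective this)).symm
  refine ⟨Equiv.ofBijective f (Finite.injective_iff_bijective.mp hinj), ?_⟩
  apply Equiv.ext
  intro x
  rcases Fin.eq_self_or_eq_succAbove i x with rfl | ⟨y, rfl⟩
  · rw [insPerm_self, h]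
  · rw [insPerm_succAbove]; exact hf y

lemma card_ins {n : ℕ} (P : Perm (Fin (n+1)) → Prop) [DecidablePred P] (i p : Fin (n+1)) :
    (Finset.univ.filter fun π : Perm (Fin (n+1)) => P π ∧ π i = p).card
    = (Finset.univ.filter fun σ : Perm (Fin n) => P (insPerm i p σ)).card := by
  rw [← Finset.card_image_of_injective _ (insPerm_inj i p)]
  congr 1
  ext π
  simp only [Finset.mem_filter, Finset.mem_univ, true_and, Finset.mem_image]
  constructor
  · rintro ⟨h1, h2⟩
    obtain ⟨σ, rfl⟩ := insPerm_surj i p π h2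
    exact ⟨σ, h1, rfl⟩
  · rintro ⟨σ, h, rfl⟩
    exact ⟨h, insPerm_self _ _ _⟩

lemma card_sum_ins {n : ℕ} (P : Perm (Fin (n+1)) → Prop) [DecidablePred P] (p : Fin (n+1)) :
    (Finset.univ.filter P).card
    = ∑ i, (Finset.univ.filter fun σ : Perm (Fin n) => P (insPerm i p σ)).card := by
  rw [Finset.card_eq_sum_card_fiberwise (f := fun π => π.symm p) (t := Finset.univ) (by simp)]
  refine Finset.sum_congr rfl fun i _ => ?_
  rw [← card_ins, Finset.filter_filter]
  congr 1
  ext π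
  simp only [Finset.mem_filter, Finset.mem_univ, true_and, Equiv.symm_apply_eq]
  exact and_congr_right fun _ => eq_comm

lemma av_ins {n : ℕ} (i : Fin (n+1)) (σ : Perm (Fin n)) :
    Av123 (insPerm i (Fin.last n) σ) ↔ Av123 σ ∧ DecPre i σ := by
  constructor
  · intro h
    refine ⟨fun x y z h1 h2 h3 h4 => ?_, fun x y hxy hy => ?_⟩
    · apply h (i.succAbove x) (i.succAbove y) (i.succAbove z) <;>
        simp [insPerm_succAbove, *]
    · by_contra hc
      have hc' : σ x < σ y := lt_of_le_of_ne (not_lt.mp hc) (fun e => hxy.ne (σ.injective e))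
      apply h (i.succAbove x) (i.succAbove y) i <;>
        simp [insPerm_succAbove, insPerm_self, hxy, hc', Fin.succAbove_lt_iff_castSucc_lt, Fin.castSucc_lt_last]
      simpa [Fin.lt_def] using hy
  · rintro ⟨h1, h2⟩ x y z hxy hyz h3 h4
    rcases Fin.eq_self_or_eq_succAbove i y with rfl | ⟨y, rfl⟩
    · rw [insPerm_self] at h4; exact absurd h4 (not_lt.mpr (Fin.le_last _))
    rcases Fin.eq_self_or_eq_succAbove i x with rfl | ⟨x, rfl⟩
    · rw [insPerm_self] at h3; exact absurd h3 (not_lt.mpr (Fin.le_last _))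
    rw [insPerm_succAbove, insPerm_succAbove, Fin.succAbove_lt_succAbove_iff] at h3
    rw [Fin.succAbove_lt_succAbove_iff] at hxy
    rcases Fin.eq_self_or_eq_succAbove i z with hz | ⟨z, rfl⟩
    · subst hz
      rw [Fin.succAbove_lt_iff_castSucc_lt] at hyz
      exact absurd h3 (h2 x y hxy (by simpa [Fin.lt_def] using hyz)).not_gt
    · rw [insPerm_succAbove, insPerm_succAbove, Fin.succAbove_lt_succAbove_iff] at h4
      rw [Fin.succAbove_lt_succAbove_iff] at hyz
      exact h1 x y z hxy hyz h3 h4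

lemma dec_ins_zero {n : ℕ} (k : ℕ) (σ : Perm (Fin n)) :
    DecPre (k+1) (insPerm 0 (Fin.last n) σ) ↔ DecPre k σ := by
  constructor
  · intro h x y hxy hy
    have := h x.succ y.succ (by simpa using hxy) (by simpa using hy)
    have e := fun x => insPerm_succAbove 0 (Fin.last n) σ x
    simp at e
    simpa [e] using this
  · intro h x y hxy hy
    have e := fun x => insPerm_succAbove 0 (Fin.last n) σ x
    simp at e
    rcases Fin.eq_zero_or_eq_succ y with rfl | ⟨y, rfl⟩
    · simp at hxy
    rcases Fin.eq_zero_or_eq_succ x with rfl | ⟨x, rfl⟩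
    · rw [insPerm_self, e]; exact Fin.castSucc_lt_last _
    · rw [e, e]
      exact h x y (by simpa using hxy) (by simpa using hy)

lemma dec_ins_pos {n : ℕ} (k : ℕ) (i : Fin (n+1)) (hi : 0 < (i : ℕ)) (σ : Perm (Fin n))
    (hd : DecPre i σ) :
    DecPre (k+1) (insPerm i (Fin.last n) σ) ↔ k + 1 ≤ i := by
  constructor
  · intro h
    by_contra hc
    have := h ⟨0, by omega⟩ i hi (by omega)
    rw [insPerm_self] at this
    exact absurd this (not_lt.mpr (Fin.le_last _))
  · intro h x y hxy hy
    rcases Fin.eq_self_or_eq_succAbove i y with rfl | ⟨y, rfl⟩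
    · omega
    rcases Fin.eq_self_or_eq_succAbove i x with rfl | ⟨x, rfl⟩
    · rw [Fin.lt_def] at hxy; omega
    rw [insPerm_succAbove, insPerm_succAbove, Fin.succAbove_lt_succAbove_iff]
    have : i.succAbove y < i := by rw [Fin.lt_def]; omega
    rw [Fin.succAbove_lt_iff_castSucc_lt] at this
    rw [Fin.succAbove_lt_succAbove_iff] at hxy
    exact hd x y hxy (by simpa [Fin.lt_def] using this)

open Classical in
noncomputable def cntD (m k : ℕ) : ℕ :=
  (Finset.univ.filter fun σ : Perm (Fin m) => Av123 σ ∧ DecPre k σ).card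

lemma cntD_zero_succ (m : ℕ) : cntD (m+1) 0 = ∑ p ∈ Finset.range (m+1), cntD m p := by
  classical
  rw [cntD, card_sum_ins _ (Fin.last m), ← Fin.sum_univ_eq_sum_range]
  refine Finset.sum_congr rfl fun i _ => ?_
  rw [cntD]
  congr 1
  ext σ
  simp only [av_ins, Finset.mem_filter, Finset.mem_univ, true_and, and_iff_left_iff_imp]
  intro _ x y _ h
  exact absurd h (Nat.not_lt_zero _)

lemma cntD_succ_succ (m k : ℕ) :
    cntD (m+1) (k+1) = cntD m k + ∑ p ∈ Finset.Ico (k+1) (m+1), cntD m p := by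
  classical
  have key : ∀ i : Fin (m+1),
     (Finset.univ.filter fun σ : Perm (Fin m) => Av123 (insPerm i (Fin.last m) σ) ∧ DecPre (k+1) (insPerm i (Fin.last m) σ)).card
      = if (i:ℕ) = 0 then cntD m k else if k + 1 ≤ (i:ℕ) then cntD m i else 0 := by
    intro i
    split_ifs with h1 h2
    · obtain rfl : i = 0 := by ext; simpa using h1
      rw [cntD]; congr 1; ext σ
      simp [av_ins, dec_ins_zero]
      intro _ _ x y _ h; simp at h
    · rw [cntD]; congr 1; ext σ
      simp only [av_ins, Finset.mem_filter, Finset.mem_univ, true_and]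
      constructor
      · exact fun h => h.1
      · exact fun h => ⟨h, (dec_ins_pos k i (by omega) σ h.2).2 h2⟩
    · rw [Finset.card_eq_zero]
      ext σ
      simp only [av_ins, Finset.mem_filter, Finset.mem_univ, true_and, Finset.notMem_empty, iff_false]
      rintro ⟨h, h'⟩
      exact h2 ((dec_ins_pos k i (by omega) σ h.2).1 h')
  rw [cntD, card_sum_ins _ (Fin.last m), Finset.sum_congr rfl (fun i _ => key i),
    Fin.sum_univ_eq_sum_range (fun i => if i = 0 then cntD m k else if k + 1 ≤ i then cntD m i else 0),
    Finset.sum_range_succ']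
  simp only [Nat.add_eq_zero_iff, one_ne_zero, and_false, if_false, if_true]
  rw [add_comm, ← Finset.sum_filter_add_sum_filter_not (Finset.Ico (k+1) (m+1)) (fun _ => True)]
  simp only [Finset.filter_true, not_true, Finset.filter_false, Finset.sum_empty, add_zero]
  congr 1
  rw [Finset.range_eq_Ico, Finset.sum_Ico_add' (fun i => if k + 1 ≤ i then cntD m i else 0), ← Finset.sum_filter]
  congr 1
  ext x; simp; omega

noncomputable def ballotT (j k : ℕ) : ℕ := PowerSeries.coeff j (PowerSeries.catalanSeries ^ (k+1))

lemma ballotT_zero (k : ℕ) : ballotT 0 k = 1 := by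
  simp [ballotT]

lemma ballotT_succ_zero (j : ℕ) : ballotT (j+1) 0 = ballotT j 1 := by
  have := congrArg (PowerSeries.coeff (j+1)) PowerSeries.catalanSeries_sq_mul_X_add_one
  rw [map_add, PowerSeries.coeff_succ_mul_X] at this
  simp [PowerSeries.coeff_one] at this
  simp [ballotT, this]

lemma ballotT_succ_succ (j k : ℕ) : ballotT (j+1) (k+1) = ballotT (j+1) k + ballotT j (k+2) := by
  have := congrArg (fun s => PowerSeries.coeff (j+1) (PowerSeries.catalanSeries ^ (k+1) * s)) PowerSeries.catalanSeries_sq_mul_X_add_one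
  simp only [mul_add, ← mul_assoc, mul_one] at this
  rw [map_add, PowerSeries.coeff_succ_mul_X] at this
  rw [ballotT, ballotT, ballotT, pow_succ _ (k+1), ← this, ← pow_add, add_comm]

lemma ballotT_catalan (m : ℕ) : ballotT m 0 = catalan m := by simp [ballotT]

lemma ballot_sum (j k : ℕ) : ballotT j (k+1) = ∑ p ∈ Finset.Ico k (j+k+1), ballotT (j + k - p) p := by
  induction j generalizing k with
  | zero => simp [ballotT_zero]
  | succ j ih =>
    rw [ballotT_succ_succ, ih (k+1), Finset.sum_eq_sum_Ico_succ_bot (by omega)]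
    rw [Finset.sum_eq_sum_Ico_succ_bot (a := k) (by omega), show j + 1 + k - k = j + 1 by omega]
    congr 1
    rw [← Finset.sum_eq_sum_Ico_succ_bot (by omega) (fun p => ballotT (j + (k+1) - p) p)]
    refine Finset.sum_congr (by congr 1; omega) fun p _ => ?_
    congr 1; omega

lemma cntD_eq (m k : ℕ) (h : k ≤ m) : cntD m k = ballotT (m - k) k := by
  induction m generalizing k with
  | zero =>
    obtain rfl : k = 0 := by omega
    rw [ballotT_zero, cntD]
    classical
    rw [Finset.filter_true_of_mem]
    · simp
    · intro σ _
      exact ⟨fun x => x.elim0, fun x => x.elim0⟩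
  | succ m ih =>
    cases k with
    | zero =>
      rw [cntD_zero_succ, Nat.sub_zero, ballotT_succ_zero, ballot_sum, Finset.range_eq_Ico]
      refine Finset.sum_congr rfl fun p hp => ?_
      rw [ih p (by simp at hp; omega)]; rfl
    | succ k =>
      rw [cntD_succ_succ, ih k (by omega)]
      rw [Finset.sum_congr rfl fun p hp => ih p (by simp at hp; omega)]
      rcases Nat.lt_or_ge k m with hk | hk
      · obtain ⟨j, rfl⟩ : ∃ j, m = j + 1 + k := ⟨m - k - 1, by omega⟩
        rw [show j + 1 + k + 1 - (k+1) = j + 1 by omega, ballotT_succ_succ, ballot_sum j (k+1),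
          show j + 1 + k - k = j + 1 by omega]
        congr 1
        refine Finset.sum_congr (by congr 1; omega) fun p _ => ?_
        congr 1; omega
      · obtain rfl : k = m := by omega
        simp [ballotT_zero]

open Classical in
lemma card_av (m : ℕ) : (Finset.univ.filter fun σ : Perm (Fin m) => Av123 σ).card = catalan m := by
  rw [← ballotT_catalan, ← Nat.sub_zero m, ← cntD_eq _ _ (Nat.zero_le _), cntD]
  simp [DecPre]

lemma av_ins_last {n : ℕ} (σ : Perm (Fin n)) :
    Av123 (insPerm (Fin.last n) 0 σ) ↔ Av123 σ := by
  have e := fun x => insPerm_succAbove (Fin.last n) 0 σ x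
  simp only [Fin.succAbove_last, Fin.succAbove_zero] at e
  constructor
  · intro h x y z h1 h2 h3 h4
    exact h x.castSucc y.castSucc z.castSucc (by simpa) (by simpa) (by simpa [e]) (by simpa [e])
  · intro h x y z h1 h2 h3 h4
    rcases Fin.eq_castSucc_or_eq_last z with ⟨z, rfl⟩ | rfl
    · rcases Fin.eq_castSucc_or_eq_last y with ⟨y, rfl⟩ | rfl
      · rcases Fin.eq_castSucc_or_eq_last x with ⟨x, rfl⟩ | rfl
        · simp only [e, Fin.succ_lt_succ_iff, Fin.castSucc_lt_castSucc_iff] at *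
          exact h x y z h1 h2 h3 h4
        · exact absurd h1 (not_lt.mpr (Fin.le_last _))
      · exact absurd h2 (not_lt.mpr (Fin.le_last _))
    · rw [insPerm_self] at h4; simp at h4

open Classical in
lemma card_av_last (m : ℕ) : (Finset.univ.filter fun σ : Perm (Fin (m+1)) => Av123 σ ∧ σ (Fin.last m) ≠ 0).card
    = catalan (m+1) - catalan m := by
  have h1 := card_ins (n := m) Av123 (Fin.last m) 0
  simp only [av_ins_last, card_av] at h1
  rw [← card_av (m+1), ← h1, ← Finset.filter_filter,
    ← Finset.card_filter_add_card_filter_not (s := Finset.univ.filter fun σ : Perm (Fin (m+1)) => Av123 σ) (fun σ => σ (Fin.last m) = 0),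
    Finset.filter_filter, Finset.filter_filter, add_tsub_cancel_left]

def hiSum (m B : ℕ) : Fin m ⊕ Fin B ≃ Fin (m + B) :=
  (Equiv.sumComm _ _).trans (finSumFinEquiv.trans (finCongr (Nat.add_comm B m)))

lemma hiSum_inl (m B : ℕ) (x : Fin m) : (hiSum m B (Sum.inl x) : ℕ) = B + x := by
  simp [hiSum, Nat.add_comm]
lemma hiSum_inr (m B : ℕ) (x : Fin B) : (hiSum m B (Sum.inr x) : ℕ) = x := by simp [hiSum]

def skewSum {m B : ℕ} (t : Perm (Fin m) × Perm (Fin B)) : Perm (Fin (m + B)) :=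
  finSumFinEquiv.symm.trans ((Equiv.sumCongr t.1 t.2).trans (hiSum m B))

lemma skew_left {m B : ℕ} (t : Perm (Fin m) × Perm (Fin B)) (x : Fin m) :
    (skewSum t (Fin.castAdd B x) : ℕ) = B + t.1 x := by
  simp [skewSum, hiSum_inl]

lemma skew_right {m B : ℕ} (t : Perm (Fin m) × Perm (Fin B)) (x : Fin B) :
    (skewSum t (Fin.natAdd m x) : ℕ) = t.2 x := by
  simp [skewSum, hiSum_inr]

lemma skew_inj {m B : ℕ} : Function.Injective (skewSum (m := m) (B := B)) := by
  rintro ⟨σ, ρ⟩ ⟨σ', ρ'⟩ h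
  have h1 : σ = σ' := by
    ext x
    have a := skew_left (σ, ρ) x
    rw [h, skew_left] at a
    simpa using a.symm
  have h2 : ρ = ρ' := by
    ext x
    have a := skew_right (σ, ρ) x
    rw [h, skew_right] at a
    simpa using a.symm
  rw [h1, h2]

def Blocks {n : ℕ} (m B : ℕ) (τ : Perm (Fin n)) : Prop :=
  (∀ x : Fin n, (x : ℕ) < m → B ≤ (τ x : ℕ)) ∧ (∀ x : Fin n, m ≤ (x : ℕ) → (τ x : ℕ) < B)

lemma skew_blocks {m B : ℕ} (t : Perm (Fin m) × Perm (Fin B)) : Blocks m B (skewSum t) := by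
  constructor
  · intro x hx
    have := skew_left t ⟨x, hx⟩
    rw [show Fin.castAdd B ⟨x, hx⟩ = x from rfl] at this
    omega
  · intro x hx
    have := skew_right t ⟨x - m, by omega⟩
    rw [show Fin.natAdd m ⟨x - m, by omega⟩ = x by ext; simp; omega] at this
    omega

lemma skew_surj {m B : ℕ} (τ : Perm (Fin (m + B))) (h : Blocks m B τ) : ∃ t, skewSum t = τ := by
  let e : Perm (Fin m ⊕ Fin B) := finSumFinEquiv.trans (τ.trans (hiSum m B).symm)
  have he : e ∈ (Equiv.Perm.sumCongrHom (Fin m) (Fin B)).range := by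
    apply Equiv.Perm.mem_sumCongrHom_range_of_perm_mapsTo_inl
    rintro _ ⟨x, rfl⟩
    rcases hy : e (Sum.inl x) with y | y
    · exact ⟨y, rfl⟩
    · exfalso
      simp only [e, Equiv.trans_apply, Equiv.symm_apply_eq] at hy
      have h1 := h.1 (Fin.castAdd B x) (by simp)
      have h2 := hiSum_inr m B y
      rw [← hy] at h2
      simp at h2
      omega
  obtain ⟨t, ht⟩ := he
  refine ⟨t, ?_⟩
  have : Equiv.sumCongr t.1 t.2 = e := ht
  rw [skewSum, this]
  ext x
  simp [e]

lemma skew_av {m B : ℕ} (t : Perm (Fin m) × Perm (Fin B)) :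
    Av123 (skewSum t) ↔ Av123 t.1 ∧ Av123 t.2 := by
  constructor
  · intro h
    constructor
    · intro x y z h1 h2 h3 h4
      apply h (Fin.castAdd B x) (Fin.castAdd B y) (Fin.castAdd B z)
      · exact h1
      · exact h2
      · rw [Fin.lt_def, skew_left, skew_left]; rw [Fin.lt_def] at h3; omega
      · rw [Fin.lt_def, skew_left, skew_left]; rw [Fin.lt_def] at h4; omega
    · intro x y z h1 h2 h3 h4
      apply h (Fin.natAdd m x) (Fin.natAdd m y) (Fin.natAdd m z)
      · simpa using h1
      · simpa using h2
      · rw [Fin.lt_def, skew_right, skew_right]; rw [Fin.lt_def] at h3; omega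
      · rw [Fin.lt_def, skew_right, skew_right]; rw [Fin.lt_def] at h4; omega
  · rintro ⟨h1, h2⟩ x y z hxy hyz hxy' hyz'
    obtain ⟨b1, b2⟩ := skew_blocks t
    rw [Fin.lt_def] at hxy hyz hxy' hyz'
    rcases Nat.lt_or_ge x m with hx | hx
    · have hy : (y : ℕ) < m := by
        by_contra hc
        have := b1 x hx
        have := b2 y (by omega)
        omega
      have hz : (z : ℕ) < m := by
        by_contra hc
        have := b1 x hx
        have := b2 z (by omega)
        omega
      have ex := skew_left t ⟨x, hx⟩
      have ey := skew_left t ⟨y, hy⟩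
      have ez := skew_left t ⟨z, hz⟩
      rw [show Fin.castAdd B ⟨x, hx⟩ = x from rfl] at ex
      rw [show Fin.castAdd B ⟨y, hy⟩ = y from rfl] at ey
      rw [show Fin.castAdd B ⟨z, hz⟩ = z from rfl] at ez
      apply h1 ⟨x, hx⟩ ⟨y, hy⟩ ⟨z, hz⟩ <;> rw [Fin.lt_def] <;> (try simp only) <;> omega
    · have ex := skew_right t ⟨x - m, by omega⟩
      have ey := skew_right t ⟨y - m, by omega⟩
      have ez := skew_right t ⟨z - m, by omega⟩
      rw [show Fin.natAdd m ⟨x - m, by omega⟩ = x by ext; simp; omega] at ex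
      rw [show Fin.natAdd m ⟨y - m, by omega⟩ = y by ext; simp; omega] at ey
      rw [show Fin.natAdd m ⟨z - m, by omega⟩ = z by ext; simp; omega] at ez
      apply h2 ⟨x - m, by omega⟩ ⟨y - m, by omega⟩ ⟨z - m, by omega⟩ <;> rw [Fin.lt_def] <;>
        (try simp only) <;> omega

def setT (M B : ℕ) : Set (Perm (Fin (M + 1 + B))) :=
  {τ | Av123 τ ∧ Blocks (M+1) B τ ∧ ∀ x : Fin (M + 1 + B), (x : ℕ) = M → (τ x : ℕ) ≠ B}

lemma card_setT (M B : ℕ) : (setT M B).ncard = (catalan (M+1) - catalan M) * catalan B := by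
  classical
  rw [← card_av_last, ← card_av B, ← Finset.card_product, ← Finset.card_image_of_injective _ skew_inj,
    ← Set.ncard_coe_finset]
  congr 1
  ext τ
  simp only [setT, Set.mem_ofPred_eq, Finset.coe_image, Set.mem_image, Finset.mem_coe,
    Finset.mem_product, Finset.mem_filter, Finset.mem_univ, true_and]
  have key : ∀ t : Perm (Fin (M+1)) × Perm (Fin B), t.1 (Fin.last M) ≠ 0 ↔
      ∀ x : Fin (M + 1 + B), (x : ℕ) = M → (skewSum t x : ℕ) ≠ B := by
    intro t
    have e := skew_left t (Fin.last M)
    constructor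
    · intro h x hx h'
      obtain rfl : x = Fin.castAdd B (Fin.last M) := by ext; simpa using hx
      apply h
      have : ((t.1 (Fin.last M) : Fin (M+1)) : ℕ) = 0 := by omega
      exact Fin.ext this
    · intro h h'
      apply h (Fin.castAdd B (Fin.last M)) (by simp)
      rw [e, h']; simp
  constructor
  · rintro ⟨h1, h2, h3⟩
    obtain ⟨t, rfl⟩ := skew_surj τ h2
    rw [skew_av] at h1
    exact ⟨t, ⟨⟨h1.1, (key t).2 h3⟩, h1.2⟩, rfl⟩
  · rintro ⟨t, ⟨⟨h1, h2⟩, h3⟩, rfl⟩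
    exact ⟨(skew_av t).2 ⟨h1, h3⟩, skew_blocks t, (key t).1 h2⟩

lemma occ_of_tau {n M B : ℕ} (τ π : Perm (Fin n)) (i p q : Fin n) (hp : (p : ℕ) = M)
    (hq : (q : ℕ) = M + 1) (hi : i < p) (hti : (τ i : ℕ) = B)
    (e1 : π i = τ q) (e2 : π p = τ i) (e3 : π q = τ p)
    (e4 : ∀ x, x ≠ i → x ≠ p → x ≠ q → π x = τ x) (hb : Blocks (M+1) B τ) (hav : Av123 τ) :
    ∀ x y z, x < y → y < z → π x < π y → π y < π z → x = i ∧ y = p ∧ z = q := by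
  intro x y z hxy hyz hx hz
  obtain ⟨b1, b2⟩ := hb
  have hl : ∀ x : Fin n, x ≠ i → (x : ℕ) < M + 1 → B < (τ x : ℕ) := by
    intro x hx h
    refine lt_of_le_of_ne (b1 x h) fun e => hx (τ.injective (Fin.ext (by omega)))
  have hip : i ≠ p := hi.ne
  have hcB : B < (τ p : ℕ) := hl p hip.symm (by omega)
  have haB : (τ q : ℕ) < B := b2 q (by omega)
  simp only [Fin.lt_def] at *
  have hne : ∀ u v : Fin n, u ≠ v → (u : ℕ) ≠ v := fun u v h h' => h (Fin.ext h')
  by_cases hyi : y = i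
  · exfalso
    subst hyi
    have := hl x (by rintro rfl; omega) (by omega)
    rw [e4 x (by rintro rfl; omega) (by rintro rfl; omega) (by rintro rfl; omega), e1] at hx
    omega
  by_cases hyp : y = p
  · subst hyp
    refine ⟨?_, rfl, ?_⟩
    · by_contra hxi
      have := hl x hxi (by omega)
      rw [e4 x hxi (by rintro rfl; omega) (by rintro rfl; omega), e2] at hx
      omega
    · by_contra hzq
      have := b2 z (by omega)
      rw [e4 z (by rintro rfl; omega) (by rintro rfl; omega) hzq, e2] at hz
      omega
  exfalso
  by_cases hyq : y = q
  · subst hyq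
    have := b2 z (by omega)
    rw [e4 z (by rintro rfl; omega) (by rintro rfl; omega) (by rintro rfl; omega), e3] at hz
    omega
  have ey := e4 y hyi hyp hyq
  rw [ey] at hx hz
  have n1 := hne _ _ hyp
  have n2 := hne _ _ hyq
  rcases Nat.lt_or_ge y M with hyM | hyM
  · skip
    have hyB := hl y hyi (by omega)
    have hx' : (τ x : ℕ) < τ y := by
      by_cases hxi : x = i
      · subst hxi; omega
      · rwa [e4 x hxi (by rintro rfl; omega) (by rintro rfl; omega)] at hx
    by_cases hzq : z = q
    · subst hzq
      rw [e3] at hz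
      exact hav x y p (by rw [Fin.lt_def]; omega) (by rw [Fin.lt_def]; omega)
        (by rw [Fin.lt_def]; omega) (by rw [Fin.lt_def]; omega)
    · have hzi : z ≠ i := by
        rintro rfl; rw [e1] at hz; omega
      have hzp : z ≠ p := by
        rintro rfl; rw [e2] at hz; omega
      rw [e4 z hzi hzp hzq] at hz
      exact hav x y z (by rw [Fin.lt_def]; omega) (by rw [Fin.lt_def]; omega)
        (by rw [Fin.lt_def]; omega) (by rw [Fin.lt_def]; omega)
  · have hyB := b2 y (by omega)
    have ez := e4 z (by rintro rfl; omega) (by rintro rfl; omega) (by rintro rfl; omega)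
    rw [ez] at hz
    by_cases hxi : x = i
    · subst hxi
      rw [e1] at hx
      exact hav q y z (by rw [Fin.lt_def]; omega) (by rw [Fin.lt_def]; omega)
        (by rw [Fin.lt_def]; omega) (by rw [Fin.lt_def]; omega)
    · have hxp : x ≠ p := by rintro rfl; rw [e2] at hx; omega
      have hxq : x ≠ q := by rintro rfl; rw [e3] at hx; omega
      rw [e4 x hxi hxp hxq] at hx
      exact hav x y z (by rw [Fin.lt_def]; omega) (by rw [Fin.lt_def]; omega)
        (by rw [Fin.lt_def]; omega) (by rw [Fin.lt_def]; omega)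

lemma tau_of_occ {n M B : ℕ} (τ π : Perm (Fin n)) (i p q : Fin n) (hp : (p : ℕ) = M)
    (hq : (q : ℕ) = M + 1) (hi : i < p) (hti : (τ i : ℕ) = B)
    (e1 : π i = τ q) (e2 : π p = τ i) (e3 : π q = τ p)
    (e4 : ∀ x, x ≠ i → x ≠ p → x ≠ q → π x = τ x) (hb : Blocks (M+1) B τ)
    (hocc : ∀ x y z, x < y → y < z → π x < π y → π y < π z → x = i ∧ y = p ∧ z = q) :
    Av123 τ := by
  intro x y z hxy hyz hx hz
  obtain ⟨b1, b2⟩ := hb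
  have hcB : B ≤ (τ p : ℕ) := b1 p (by omega)
  have haB : (τ q : ℕ) < B := b2 q (by omega)
  simp only [Fin.lt_def] at *
  have hne : ∀ u v : Fin n, u ≠ v → (u : ℕ) ≠ v := fun u v h h' => h (Fin.ext h')
  rcases Nat.lt_or_ge x (M+1) with hxM | hxM
  · have hxB := b1 x hxM
    have hzM : (z : ℕ) < M + 1 := by
      by_contra hc
      have := b2 z (by omega)
      omega
    have ey := e4 y (by rintro rfl; omega) (by rintro rfl; omega) (by rintro rfl; omega)
    have hx' : (π x : ℕ) < π y := by
      rw [ey]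
      by_cases hxi : x = i
      · subst hxi; rw [e1]; omega
      · rwa [e4 x hxi (by rintro rfl; omega) (by rintro rfl; omega)]
    by_cases hzp : z = p
    · subst hzp
      have := hocc x y q hxy (by omega) hx' (by rw [ey, e3]; omega)
      have := this.2.1
      subst this
      omega
    · have := hocc x y z hxy (by omega) hx'
        (by rwa [ey, e4 z (by rintro rfl; omega) hzp (by rintro rfl; omega)])
      have := this.2.1
      subst this
      omega
  · have ey := e4 y (by rintro rfl; omega) (by rintro rfl; omega) (by rintro rfl; omega)
    have ez := e4 z (by rintro rfl; omega) (by rintro rfl; omega) (by rintro rfl; omega)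
    by_cases hxq : x = q
    · subst hxq
      have := hocc i y z (by omega) (by omega) (by rwa [e1, ey]) (by rwa [ey, ez])
      have := this.2.1
      subst this
      omega
    · have ex := e4 x (by rintro rfl; omega) (by rintro rfl; omega) hxq
      have := hocc x y z (by omega) (by omega) (by rwa [ex, ey]) (by rwa [ey, ez])
      have := this.2.1
      subst this
      omega

/-- The unique occurrence of 1-2-3 is `(i, p, q)`, with `q = p + 1` and middle value `B`. -/
def UniqueOcc {n : ℕ} (B : ℕ) (π : Perm (Fin n)) (i p q : Fin n) : Prop :=
  (q : ℕ) = p + 1 ∧ i < p ∧ π i < π p ∧ π p < π q ∧ (π p : ℕ) = B ∧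
    ∀ x y z, x < y → y < z → π x < π y → π y < π z → x = i ∧ y = p ∧ z = q

lemma mem_setS_iff {n : ℕ} (B : ℕ) (π : Perm (Fin n)) :
    (occ1_23 π = 1 ∧ occ123 π = 1 ∧
        (∀ i j k : Fin n, i < j → j < k → (k : ℕ) = (j : ℕ) + 1 →
          π i < π j → π j < π k → (π j : ℕ) = B)) ↔ ∃ i p q, UniqueOcc B π i p q := by
  constructor
  · rintro ⟨h1, h2, h3⟩
    obtain ⟨⟨i, p, q⟩, h1⟩ := Finset.card_eq_one.mp h1
    obtain ⟨t, h2⟩ := Finset.card_eq_one.mp h2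
    have m1 : (i, p, q) ∈ ({(i, p, q)} : Finset (Fin n × Fin n × Fin n)) := Finset.mem_singleton_self _
    rw [← h1] at m1
    simp only [Finset.mem_filter, Finset.mem_univ, true_and] at m1
    have m2 : ∀ x y z, x < y → y < z → π x < π y → π y < π z → (x, y, z) = t := by
      intro x y z a b c d
      rw [← Finset.mem_singleton, ← h2]
      simp only [Finset.mem_filter, Finset.mem_univ, true_and]
      exact ⟨a, b, c, d⟩
    obtain ⟨a, b, c, d, e⟩ := m1
    refine ⟨i, p, q, c, a, d, e, h3 i p q a b c d e, ?_⟩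
    intro x y z hx hy hz hw
    have := (m2 x y z hx hy hz hw).trans (m2 i p q a b d e).symm
    simpa using this
  · rintro ⟨i, p, q, c, a, d, e, f, h⟩
    have hpq : p < q := by rw [Fin.lt_def]; omega
    refine ⟨?_, ?_, ?_⟩
    · refine Finset.card_eq_one.mpr ⟨(i, p, q), ?_⟩
      ext ⟨x, y, z⟩
      simp only [Finset.mem_filter, Finset.mem_univ, true_and, Finset.mem_singleton, Prod.mk.injEq]
      constructor
      · rintro ⟨h1, h2, h3, h4, h5⟩
        exact h x y z h1 h2 h4 h5
      · rintro ⟨rfl, rfl, rfl⟩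
        exact ⟨a, hpq, c, d, e⟩
    · refine Finset.card_eq_one.mpr ⟨(i, p, q), ?_⟩
      ext ⟨x, y, z⟩
      simp only [Finset.mem_filter, Finset.mem_univ, true_and, Finset.mem_singleton, Prod.mk.injEq]
      constructor
      · rintro ⟨h1, h2, h4, h5⟩
        exact h x y z h1 h2 h4 h5
      · rintro ⟨rfl, rfl, rfl⟩
        exact ⟨a, hpq, d, e⟩
    · intro x y z h1 h2 _ h4 h5
      obtain ⟨_, rfl, _⟩ := h x y z h1 h2 h4 h5
      exact f

/-- Position of the middle entry of the unique occurrence. -/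
lemma UniqueOcc.struct {n B : ℕ} {π : Perm (Fin n)} {i p q : Fin n} (h : UniqueOcc B π i p q) :
    (∀ x, x < p → x ≠ i → π p < π x) ∧ (∀ z, p < z → z ≠ q → π z < π p) := by
  obtain ⟨c, a, d, e, f, h⟩ := h
  have hpq : p < q := by rw [Fin.lt_def]; omega
  constructor
  · intro x hx hxi
    by_contra hc
    have : π x < π p := lt_of_le_of_ne (not_lt.mp hc) fun e => hx.ne (π.injective e)
    exact hxi (h x p q hx hpq this e).1
  · intro x hx hxi
    by_contra hc
    have : π p < π x := lt_of_le_of_ne (not_lt.mp hc) fun e => hx.ne (π.injective e)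
    exact hxi (h i p x a hx d this).2.2

lemma UniqueOcc.pos {n B : ℕ} {π : Perm (Fin n)} {i p q : Fin n} (h : UniqueOcc B π i p q) :
    (p : ℕ) + B + 1 = n := by
  obtain ⟨s1, s2⟩ := h.struct
  obtain ⟨c, a, d, e, f, h⟩ := h
  have hpq : p < q := by rw [Fin.lt_def]; omega
  have key : insert q ((Finset.Iio p).erase i) = (Finset.Ioi (π p)).map π.symm.toEmbedding := by
    ext x
    simp only [Finset.mem_insert, Finset.mem_erase, Finset.mem_Iio, Finset.mem_map_equiv,
      Equiv.symm_symm, Finset.mem_Ioi]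
    constructor
    · rintro (rfl | ⟨h1, h2⟩)
      · exact e
      · exact s1 x h2 h1
    · intro hx
      rcases lt_trichotomy x p with h1 | rfl | h1
      · right
        refine ⟨?_, h1⟩
        rintro rfl
        exact absurd hx d.not_gt
      · exact absurd hx (lt_irrefl _)
      · left
        by_contra hc
        exact absurd hx (s2 x h1 hc).not_gt
  have hc := congrArg Finset.card key
  rw [Finset.card_insert_of_notMem (by simp [hpq.le]), Finset.card_erase_of_mem (by simpa using a),
    Finset.card_map, Fin.card_Iio, Fin.card_Ioi] at hc
  rw [Fin.lt_def] at a
  omega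

lemma cyc_apply {n : ℕ} (i p q : Fin n) (hip : i ≠ p) (hiq : i ≠ q) (hpq : p ≠ q) :
    (swap i q * swap p q) i = q ∧ (swap i q * swap p q) p = i ∧ (swap i q * swap p q) q = p ∧
    ∀ x, x ≠ i → x ≠ p → x ≠ q → (swap i q * swap p q) x = x := by
  refine ⟨?_, ?_, ?_, ?_⟩
  · simp [swap_apply_of_ne_of_ne hip hiq]
  · simp
  · simp [swap_apply_of_ne_of_ne hip.symm hpq]
  · intro x h1 h2 h3
    simp [swap_apply_of_ne_of_ne, h1, h2, h3]

def fMap {n : ℕ} (p q v : Fin n) (τ : Perm (Fin n)) : Perm (Fin n) :=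
  τ * (swap (τ.symm v) q * swap p q)

lemma setS_card (M B : ℕ) (hB : 0 < B) :
    {π : Perm (Fin (M + 1 + B)) | ∃ i p q, UniqueOcc B π i p q}.ncard = (setT M B).ncard := by
  let p : Fin (M + 1 + B) := ⟨M, by omega⟩
  let q : Fin (M + 1 + B) := ⟨M + 1, by omega⟩
  let v : Fin (M + 1 + B) := ⟨B, by omega⟩
  have hpq : p ≠ q := by intro h; simp [p, q] at h
  have fact : ∀ τ ∈ setT M B, τ.symm v < p := by
    rintro τ ⟨_, ⟨b1, b2⟩, h3⟩
    have e : (τ (τ.symm v) : ℕ) = B := by simp [v]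
    have h4 : (τ.symm v : ℕ) ≠ M := fun h => h3 _ h e
    rw [Fin.lt_def]
    by_contra hc
    simp only [p] at hc
    have := b2 (τ.symm v) (by omega)
    omega
  have vals : ∀ τ ∈ setT M B, fMap p q v τ (τ.symm v) = τ q ∧ fMap p q v τ p = τ (τ.symm v) ∧
      fMap p q v τ q = τ p ∧
      ∀ x, x ≠ τ.symm v → x ≠ p → x ≠ q → fMap p q v τ x = τ x := by
    intro τ hτ
    have h := fact τ hτ
    have hiq : τ.symm v ≠ q := by
      intro e; rw [e, Fin.lt_def] at h; simp [p, q] at h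
    obtain ⟨c1, c2, c3, c4⟩ := cyc_apply (τ.symm v) p q h.ne hiq hpq
    refine ⟨?_, ?_, ?_, ?_⟩
    · rw [fMap, Perm.mul_apply, c1]
    · rw [fMap, Perm.mul_apply, c2]
    · rw [fMap, Perm.mul_apply, c3]
    · intro x x1 x2 x3
      rw [fMap, Perm.mul_apply, c4 x x1 x2 x3]
  have inj : Set.InjOn (fMap p q v) (setT M B) := by
    intro τ hτ τ' hτ' h
    have hi : τ.symm v = τ'.symm v := by
      obtain ⟨a1, a2, a3, a4⟩ := vals τ hτ
      obtain ⟨a1', a2', a3', a4'⟩ := vals τ' hτ'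
      by_contra hne
      have hlt := fact τ hτ
      have := a4' (τ.symm v) hne hlt.ne (by
        intro e; rw [e, Fin.lt_def] at hlt; simp [p, q] at hlt)
      rw [← h, a1] at this
      have k1 := hτ.2.1.2 q (by simp [q])
      have k2 := hτ'.2.1.1 (τ.symm v) (by rw [Fin.lt_def] at hlt; simp only [p] at hlt; omega)
      rw [this] at k1
      omega
    unfold fMap at h
    rw [hi] at h
    exact mul_right_cancel h
  rw [← Set.ncard_image_of_injOn inj]
  congr 1
  ext π
  simp only [Set.mem_ofPred_eq, Set.mem_image]
  constructor
  · rintro ⟨i, p', q', h⟩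
    have hpos := h.pos
    obtain rfl : p' = p := Fin.ext (by simp only [p]; omega)
    obtain rfl : q' = q := Fin.ext (by have := h.1; simp only [p] at this; simp only [q]; omega)
    obtain ⟨s1, s2⟩ := h.struct
    obtain ⟨c, a, d, e, f, h⟩ := h
    have hiq : i ≠ q := by
      rintro rfl; rw [Fin.lt_def] at a; simp [p, q] at a
    obtain ⟨c1, c2, c3, c4⟩ := cyc_apply i p q a.ne hiq hpq
    set γ := swap i q * swap p q with hγ
    have t : ∀ x, (π * γ⁻¹) (γ x) = π x := by intro x; simp
    have t1 := t i; rw [c1] at t1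
    have t2 := t p; rw [c2] at t2
    have t3 := t q; rw [c3] at t3
    have t4 : ∀ x, x ≠ i → x ≠ p → x ≠ q → (π * γ⁻¹) x = π x := by
      intro x x1 x2 x3
      have := t x
      rwa [c4 x x1 x2 x3] at this
    have hv : (π * γ⁻¹).symm v = i := by
      rw [Equiv.symm_apply_eq, t2]; exact Fin.ext f.symm
    have hbl : Blocks (M+1) B (π * γ⁻¹) := by
      constructor
      · intro x hx
        by_cases x1 : x = i
        · subst x1; rw [t2]; omega
        by_cases x2 : x = p
        · subst x2; rw [t3]; rw [Fin.lt_def] at e; omega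
        have x3 : x ≠ q := by rintro rfl; simp [q] at hx
        rw [t4 x x1 x2 x3]
        have := s1 x (lt_of_le_of_ne (by rw [Fin.le_def]; simp only [p]; omega) x2) x1
        rw [Fin.lt_def] at this; omega
      · intro x hx
        by_cases x3 : x = q
        · subst x3; rw [t1]; rw [Fin.lt_def] at d; omega
        have hpx : p < x := by rw [Fin.lt_def]; simp only [p]; omega
        rw [t4 x (by rintro rfl; exact absurd a hpx.not_gt) hpx.ne' x3]
        have := s2 x hpx x3
        rw [Fin.lt_def] at this; omega
    refine ⟨π * γ⁻¹, ⟨?_, hbl, ?_⟩, ?_⟩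
    · exact tau_of_occ (π * γ⁻¹) π i p q rfl rfl a (by rw [t2]; exact f) t1.symm t2.symm t3.symm
        (fun x x1 x2 x3 => (t4 x x1 x2 x3).symm) hbl h
    · intro x hx
      obtain rfl : x = p := Fin.ext hx
      rw [t3]
      rw [Fin.lt_def] at e; omega
    · rw [fMap, hv, ← hγ]; simp
  · rintro ⟨τ, hτ, rfl⟩
    obtain ⟨a1, a2, a3, a4⟩ := vals τ hτ
    have hlt := fact τ hτ
    have e : (τ (τ.symm v) : ℕ) = B := by simp [v]
    have k1 := hτ.2.1.2 q (by simp [q])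
    have k2 := hτ.2.1.1 p (by simp [p])
    have k3 := hτ.2.2 p rfl
    refine ⟨τ.symm v, p, q, rfl, hlt, ?_, ?_, ?_, ?_⟩
    · rw [a1, a2, Fin.lt_def]; omega
    · rw [a2, a3, Fin.lt_def]; omega
    · rw [a2, e]
    · exact occ_of_tau τ _ _ p q rfl rfl hlt e a1 a2 a3 a4 hτ.2.1 hτ.1

/-- The number of permutations of length `n` with exactly one occurrence of
1-23 and exactly one occurrence of 1-2-3 whose unique 1-23 occurrence has
middle value `b` (i.e. `b - 1` as an element of `Fin n`) equals
`(C_(n-b+1) - C_(n-b)) * C_(b-1)`. -/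
theorem single_1_23_middle_value_count (n b : ℕ) (hn : 3 ≤ n) (hb : 2 ≤ b) (hb' : b ≤ n - 1) :
    {π : Equiv.Perm (Fin n) | occ1_23 π = 1 ∧ occ123 π = 1 ∧
        (∀ i j k : Fin n, i < j → j < k → (k : ℕ) = (j : ℕ) + 1 →
          π i < π j → π j < π k → (π j : ℕ) = b - 1)}.ncard
      = (catalan (n - b + 1) - catalan (n - b)) * catalan (b - 1) := by
  simp only [mem_setS_iff]
  obtain ⟨M, rfl⟩ : ∃ M, n = M + 1 + (b - 1) := ⟨n - b, by omega⟩
  rw [setS_card M (b - 1) (by omega), card_setT, show M + 1 + (b - 1) - b = M by omega]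
end
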